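/- With V=Q^6 the standard symplectic space and H = GL2 ⊠ GSp4 embedded in GSp6 acting on V=⟨e1,f1⟩⊕⟨e2,e3,f3,f2⟩ (with matching similitudes), every H(Q)-orbit of pairs (F2 ⊆ F3) with F2 a 2-dimensional isotropic subspace and F3 a 3-dimensional isotropic subspace of V contains exactly one of the five representatives: (1) ⟨f2,f3⟩⊆⟨f1,f2,f3⟩, (2) ⟨f1,f2⟩⊆⟨f1,f2,f3⟩, (3) ⟨f1+f2,f3⟩⊆⟨f1,f2,f3⟩, (4) ⟨f1+f2,f3⟩⊆⟨f1+f2,e1-e2,f3⟩, (5) ⟨f1+f2,e1-e2⟩⊆⟨f1+f2,e1-e2,f3⟩. -/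

import Mathlib

/-! The 6-dimensional symplectic ℚ-space `V = ⟨e1,f1⟩ ⊕ ⟨e2,e3,f3,f2⟩`, with the group
`H = GL2 ⊠ GSp4` of symplectic similitudes preserving the two summands (a single similitude
factor encodes the matching-similitude condition), acting on flags `F2 ⊆ F3` of isotropic
subspaces of dimensions 2 and 3. -/

abbrev V6 : Type := Fin 6 → ℚ

/-- Symplectic form; indices `0,…,5` are `e1,e2,e3,f3,f2,f1`. -/
def symp (x y : V6) : ℚ :=
  x 0 * y 5 - x 5 * y 0 + x 1 * y 4 - x 4 * y 1 + x 2 * y 3 - x 3 * y 2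

def e1 : V6 := Pi.single 0 1
def e2 : V6 := Pi.single 1 1
def e3 : V6 := Pi.single 2 1
def f3 : V6 := Pi.single 3 1
def f2 : V6 := Pi.single 4 1
def f1 : V6 := Pi.single 5 1

/-- `V1 = ⟨e1, f1⟩`. -/
def V1 : Submodule ℚ V6 := Submodule.span ℚ {e1, f1}
/-- `V2 = ⟨e2, e3, f3, f2⟩`. -/
def V2 : Submodule ℚ V6 := Submodule.span ℚ {e2, e3, f3, f2}

/-- `H(ℚ) = (GL2 ⊠ GSp4)(ℚ)`: invertible linear maps preserving the decomposition
`V = V1 ⊕ V2` and scaling the symplectic form by a single nonzero similitude factor. -/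
def Hgrp : Set (V6 ≃ₗ[ℚ] V6) :=
  {g | (∃ ν : ℚ, ν ≠ 0 ∧ ∀ x y : V6, symp (g x) (g y) = ν * symp x y) ∧
    Submodule.map (g : V6 →ₗ[ℚ] V6) V1 = V1 ∧ Submodule.map (g : V6 →ₗ[ℚ] V6) V2 = V2}

/-- A subspace is isotropic if the symplectic form vanishes on it. -/
def IsIsotropic (W : Submodule ℚ V6) : Prop := ∀ x ∈ W, ∀ y ∈ W, symp x y = 0

/-- The five representative flags. -/
def repFlag : Fin 5 → Submodule ℚ V6 × Submodule ℚ V6 :=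
  ![(Submodule.span ℚ {f2, f3}, Submodule.span ℚ {f1, f2, f3}),
    (Submodule.span ℚ {f1, f2}, Submodule.span ℚ {f1, f2, f3}),
    (Submodule.span ℚ {f1 + f2, f3}, Submodule.span ℚ {f1, f2, f3}),
    (Submodule.span ℚ {f1 + f2, f3}, Submodule.span ℚ {f1 + f2, e1 - e2, f3}),
    (Submodule.span ℚ {f1 + f2, e1 - e2}, Submodule.span ℚ {f1 + f2, e1 - e2, f3})]

/-!
A maximal isotropic subspace need not split along `V = V1 ⊕ V2`, but an isotropic `F` meeting the
plane `V1` does: if `l ∈ F ∩ V1` is nonzero, the `V1`-component of any vector of `F` is orthogonal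
to `l`, hence a multiple of `l`, so that `F = (F ∩ V1) ⊕ (F ∩ V2)`. The group `H` is transitive on
symplectic bases adapted to `V1 ⊕ V2` (up to the similitude factor), and preserves whether
`F2 ⊆ V2` and which of `F2 ∩ V1`, `F2 ∩ V2`, `F3 ∩ V1` vanish. These conditions separate the five
representatives. Conversely they determine the orbit: when `F3 ∩ V1 ≠ 0`, which includes the case
`F2 ⊆ V2`, the splitting supplies the vectors `f1`, `f2`, `f3` of an adapted basis; otherwise there
are vectors `x ∈ F2` and `y ∈ F3` whose `V1`-components pair to some `ν ≠ 0`, so that their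
`V2`-components pair to `-ν`, and they play the roles of `f1 + f2` and `e1 - e2`.
-/

namespace FlagOrbit

open Module Submodule
open LinearMap (BilinForm)

section LinearAlgebra

variable {K V : Type*} [Field K] [AddCommGroup V] [Module K V] {ω : BilinForm K V}

lemma disjoint_span_pair_iff {u v : V} {A : Submodule K V} :
    Disjoint (span K {u, v}) A ↔ ∀ s t : K, s • u + t • v ∈ A → s • u + t • v = 0 := by
  simp only [disjoint_def, mem_span_pair]
  grind

lemma disjoint_span_triple_iff {u v w : V} {A : Submodule K V} :
    Disjoint (span K {u, v, w}) A ↔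
      ∀ r s t : K, r • u + s • v + t • w ∈ A → r • u + s • v + t • w = 0 := by
  simp only [disjoint_def, mem_span_triple]
  grind

lemma finrank_span_pair_of_linearIndependent {u v : V} (h : LinearIndependent K ![u, v]) :
    finrank K (span K {u, v}) = 2 := by
  rw [← Matrix.range_cons_cons_empty, finrank_span_eq_card h, Fintype.card_fin]

lemma finrank_span_triple_of_linearIndependent {u v w : V}
    (h : LinearIndependent K ![u, v, w]) : finrank K (span K {u, v, w}) = 3 := by
  have hrange : Set.range ![u, v, w] = {u, v, w} := by
    rw [Matrix.range_cons, Matrix.range_cons_cons_empty, Set.singleton_union]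
  rw [← hrange, finrank_span_eq_card h, Fintype.card_fin]

lemma not_disjoint_iff_exists_ne_zero {A B : Submodule K V} :
    ¬ Disjoint A B ↔ ∃ x ∈ A, x ∈ B ∧ x ≠ 0 := by
  simp only [disjoint_def, not_forall, exists_prop]

lemma exists_linearIndependent_pair_of_mem {F : Submodule K V} (hF : 1 < finrank K F) {x : V}
    (hx : x ∈ F) (hx0 : x ≠ 0) : ∃ y ∈ F, LinearIndependent K ![x, y] := by
  obtain ⟨⟨y, hy⟩, hxy⟩ := exists_linearIndependent_pair_of_one_lt_finrank hF
    (x := (⟨x, hx⟩ : F)) (by simpa using hx0)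
  refine ⟨y, hy, ?_⟩
  simpa [LinearIndependent.pair_iff, Subtype.ext_iff] using hxy

lemma map_eq_of_map_le_of_finrank_eq {V' : Type*} [AddCommGroup V'] [Module K V']
    {g : V ≃ₗ[K] V'} {A : Submodule K V} {B : Submodule K V'} [FiniteDimensional K B]
    (hle : A.map (g : V →ₗ[K] V') ≤ B) (hrank : finrank K A = finrank K B) :
    A.map (g : V →ₗ[K] V') = B :=
  eq_of_le_of_finrank_eq hle ((g.finrank_map_eq A).trans hrank)

lemma disjoint_map_map_iff {V' : Type*} [AddCommGroup V'] [Module K V'] (g : V ≃ₗ[K] V')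
    (A B : Submodule K V) :
    Disjoint (A.map (g : V →ₗ[K] V')) (B.map (g : V →ₗ[K] V')) ↔ Disjoint A B :=
  disjoint_map_orderIso_iff (f := orderIsoMapComap g)

lemma injective_of_similitude (hω : ω.Nondegenerate) {T : V →ₗ[K] V} {ν : K} (hν : ν ≠ 0)
    (hT : ∀ x y, ω (T x) (T y) = ν * ω x y) : Function.Injective T := by
  refine (injective_iff_map_eq_zero T).2 fun x hx ↦ hω.1 x fun y ↦ ?_
  simpa [hx, hν] using hT x y

variable [FiniteDimensional K V]

lemma not_disjoint_of_finrank_lt {A B C : Submodule K V} (hA : A ≤ C) (hB : B ≤ C)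
    (h : finrank K C < finrank K A + finrank K B) : ¬ Disjoint A B := by
  intro hdisj
  have hsum := finrank_sup_add_finrank_inf_eq A B
  rw [hdisj.eq_bot, finrank_bot] at hsum
  have := finrank_mono (sup_le hA hB)
  lia

lemma exists_forall_form_apply_eq (hω : ω.Nondegenerate) {ι : Type*} {v : ι → V}
    (hv : LinearIndependent K v) (c : ι → K) : ∃ x, ∀ i, ω x (v i) = c i := by
  obtain ⟨φ, hφ⟩ := (Finsupp.linearCombination K v).exists_leftInverse_of_injective
    (LinearMap.ker_eq_bot.2 hv)
  refine ⟨(ω.toDual hω).symm (Finsupp.linearCombination K c ∘ₗ φ), fun i ↦ ?_⟩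
  have hφv : φ (v i) = Finsupp.single i 1 := by
    simpa using LinearMap.congr_fun hφ (Finsupp.single i 1)
  simp [hφv]

lemma orthogonal_eq_self_of_isotropic (hω : ω.Nondegenerate) {F : Submodule K V}
    (hF : F ≤ ω.orthogonal F) (hrank : 2 * finrank K F = finrank K V) :
    ω.orthogonal F = F := by
  refine (eq_of_le_of_finrank_eq hF ?_).symm
  rw [LinearMap.BilinForm.finrank_orthogonal hω]
  lia

end LinearAlgebra

/-- An orthogonal decomposition `V = U ⊕ W` of the symplectic space `(V, ω)`, the coordinate-free
form of `V = V1 ⊕ V2`. -/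
structure IsSymplecticSplitting {K V : Type*} [Field K] [AddCommGroup V] [Module K V]
    (ω : BilinForm K V) (U W : Submodule K V) : Prop where
  isAlt : ω.IsAlt
  nondegenerate : ω.Nondegenerate
  isCompl : IsCompl U W
  orthogonal : ∀ u ∈ U, ∀ w ∈ W, ω u w = 0

/-- A symplectic basis up to the similitude factor `ν` that is adapted to the splitting: `(e₁, f₁)`
lies in `U` and `(e₂, e₃, f₃, f₂)` in `W`. For `ν ≠ 0` these are the images of the standard basis
under the elements of `H`. -/
structure IsAdaptedFrame {K V : Type*} [Field K] [AddCommGroup V] [Module K V]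
    (ω : BilinForm K V) (U W : Submodule K V) (ν : K) (e₁ e₂ e₃ f₃ f₂ f₁ : V) : Prop where
  e₁_mem : e₁ ∈ U
  f₁_mem : f₁ ∈ U
  e₂_mem : e₂ ∈ W
  e₃_mem : e₃ ∈ W
  f₃_mem : f₃ ∈ W
  f₂_mem : f₂ ∈ W
  form_e₁_f₁ : ω e₁ f₁ = ν
  form_e₂_f₂ : ω e₂ f₂ = ν
  form_e₃_f₃ : ω e₃ f₃ = ν
  form_e₂_e₃ : ω e₂ e₃ = 0
  form_e₂_f₃ : ω e₂ f₃ = 0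
  form_e₃_f₂ : ω e₃ f₂ = 0
  form_f₂_f₃ : ω f₂ f₃ = 0

namespace IsSymplecticSplitting

variable {K V : Type*} [Field K] [AddCommGroup V] [Module K V] {ω : BilinForm K V}
  {U W F : Submodule K V}

protected lemma symm (h : IsSymplecticSplitting ω U W) : IsSymplecticSplitting ω W U where
  isAlt := h.isAlt
  nondegenerate := h.nondegenerate
  isCompl := h.isCompl.symm
  orthogonal w hw u hu := h.isAlt.isRefl.eq_zero (h.orthogonal u hu w hw)

lemma exists_add_eq (h : IsSymplecticSplitting ω U W) (x : V) : ∃ u ∈ U, ∃ w ∈ W, u + w = x :=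
  mem_sup.1 (h.isCompl.sup_eq_top ▸ mem_top)

lemma form_add_left_eq (h : IsSymplecticSplitting ω U W) {u w y : V} (hw : w ∈ W) (hy : y ∈ U) :
    ω (u + w) y = ω u y := by
  rw [map_add, LinearMap.add_apply, h.symm.orthogonal w hw y hy, add_zero]

lemma form_add_add (h : IsSymplecticSplitting ω U W) {u u' w w' : V} (hu : u ∈ U) (hu' : u' ∈ U)
    (hw : w ∈ W) (hw' : w' ∈ W) : ω (u + w) (u' + w') = ω u u' + ω w w' := by
  simp [h.orthogonal u hu w' hw', h.symm.orthogonal w hw u' hu']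

variable [FiniteDimensional K V]

lemma exists_mem_forall_form_eq (h : IsSymplecticSplitting ω U W) {ι : Type*} {v : ι → V}
    (hv : LinearIndependent K v) (hvU : ∀ i, v i ∈ U) (c : ι → K) :
    ∃ x ∈ U, ∀ i, ω x (v i) = c i := by
  obtain ⟨x, hx⟩ := exists_forall_form_apply_eq h.nondegenerate hv c
  obtain ⟨u, hu, w, hw, rfl⟩ := h.exists_add_eq x
  exact ⟨u, hu, fun i ↦ by rw [← hx i, h.form_add_left_eq hw (hvU i)]⟩

lemma exists_mem_form_eq_one (h : IsSymplecticSplitting ω U W) {l : V} (hl : l ∈ U)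
    (hl0 : l ≠ 0) : ∃ a ∈ U, ω a l = 1 := by
  obtain ⟨a, ha, hal⟩ := h.exists_mem_forall_form_eq (v := fun _ : Unit ↦ l)
    (LinearIndependent.of_subsingleton () hl0) (fun _ ↦ hl) 1
  exact ⟨a, ha, hal ()⟩

lemma form_ne_zero_of_linearIndependent (h : IsSymplecticSplitting ω U W) (hU : finrank K U = 2)
    {x y : V} (hx : x ∈ U) (hy : y ∈ U) (hxy : LinearIndependent K ![x, y]) : ω x y ≠ 0 := by
  intro h0
  have hspan : span K {x, y} = U := by
    refine eq_of_le_of_finrank_eq (span_le.2 (by simp [Set.insert_subset_iff, hx, hy])) ?_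
    rw [hU, finrank_span_pair_of_linearIndependent hxy]
  obtain ⟨a, ha, hax⟩ := h.exists_mem_form_eq_one hx (hxy.ne_zero 0)
  obtain ⟨s, t, rfl⟩ := mem_span_pair.1 (hspan.ge ha)
  simp [h.isAlt.self_eq_zero, h.isAlt.isRefl.eq_zero h0] at hax

lemma finrank_inf_le_one_of_isotropic (h : IsSymplecticSplitting ω U W) (hU : finrank K U = 2)
    (hF : F ≤ ω.orthogonal F) : finrank K ↥(F ⊓ U) ≤ 1 := by
  by_contra! hlt
  obtain ⟨x, hx, hx0⟩ := exists_mem_ne_zero_of_ne_bot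
    (one_le_finrank_iff.1 hlt.le)
  obtain ⟨y, hy, hxy⟩ := exists_linearIndependent_pair_of_mem hlt hx hx0
  exact h.form_ne_zero_of_linearIndependent hU hx.2 hy.2 hxy (hF hy.1 x hx.1)

lemma le_inf_sup_inf_of_isotropic (h : IsSymplecticSplitting ω U W) (hU : finrank K U = 2)
    (hF : F ≤ ω.orthogonal F) (hFU : ¬ Disjoint F U) : F ≤ F ⊓ U ⊔ F ⊓ W := by
  obtain ⟨l, hlF, hlU, hl0⟩ := not_disjoint_iff_exists_ne_zero.1 hFU
  intro x hx
  obtain ⟨u, hu, w, hw, rfl⟩ := h.exists_add_eq x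
  have hul : ω u l = 0 := by rw [← h.form_add_left_eq hw hlU]; exact hF hlF _ hx
  obtain ⟨c, rfl⟩ : ∃ c : K, c • l = u := by
    by_contra! hli
    exact h.form_ne_zero_of_linearIndependent hU hlU hu ((LinearIndependent.pair_iff' hl0).2 hli)
      (h.isAlt.isRefl.eq_zero hul)
  have huF := F.smul_mem c hlF
  exact add_mem_sup ⟨huF, hu⟩ ⟨(F.add_mem_iff_right huF).1 hx, hw⟩

lemma finrank_le_finrank_inf_add_one (h : IsSymplecticSplitting ω U W) (hU : finrank K U = 2)
    (hF : F ≤ ω.orthogonal F) (hFU : ¬ Disjoint F U) : finrank K F ≤ finrank K ↥(F ⊓ W) + 1 :=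
  calc finrank K F ≤ finrank K ↥(F ⊓ U ⊔ F ⊓ W) :=
        finrank_mono (h.le_inf_sup_inf_of_isotropic hU hF hFU)
    _ ≤ finrank K ↥(F ⊓ U) + finrank K ↥(F ⊓ W) := finrank_add_le_finrank_add_finrank _ _
    _ ≤ finrank K ↥(F ⊓ W) + 1 := by
      have := h.finrank_inf_le_one_of_isotropic hU hF
      lia

lemma exists_isAdaptedFrame_of_isotropic (h : IsSymplecticSplitting ω U W) {l w₂ w₃ : V}
    (hl : l ∈ U) (hl0 : l ≠ 0) (hw₂ : w₂ ∈ W) (hw₃ : w₃ ∈ W)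
    (hli : LinearIndependent K ![w₂, w₃]) (hw : ω w₂ w₃ = 0) :
    ∃ e₁ e₂ e₃, IsAdaptedFrame ω U W 1 e₁ e₂ e₃ w₃ w₂ l := by
  obtain ⟨a, ha, hal⟩ := h.exists_mem_form_eq_one hl hl0
  have hmem : ∀ i, ![w₂, w₃] i ∈ W := by simp [Fin.forall_fin_two, hw₂, hw₃]
  obtain ⟨c₂, hc₂, hc₂w⟩ := h.symm.exists_mem_forall_form_eq hli hmem ![1, 0]
  obtain ⟨c₃, hc₃, hc₃w⟩ := h.symm.exists_mem_forall_form_eq hli hmem ![0, 1]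
  simp only [Fin.forall_fin_two, Matrix.cons_val_zero, Matrix.cons_val_one] at hc₂w hc₃w
  refine ⟨a, c₂, c₃ - ω c₂ c₃ • w₂, ?_⟩
  constructor <;>
    simp [*, h.isAlt.self_eq_zero, sub_mem, smul_mem]

lemma exists_isAdaptedFrame_of_form_ne_zero (h : IsSymplecticSplitting ω U W)
    {x₁ x₂ y₁ y₂ w : V} (hx₁ : x₁ ∈ U) (hx₂ : x₂ ∈ W) (hy₁ : y₁ ∈ U) (hy₂ : y₂ ∈ W) (hw : w ∈ W)
    (hw0 : w ≠ 0) (hxy : ω (x₁ + x₂) (y₁ + y₂) = 0) (hxw : ω (x₁ + x₂) w = 0)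
    (hyw : ω (y₁ + y₂) w = 0) (hν : ω x₁ y₁ ≠ 0) :
    ∃ e₃, IsAdaptedFrame ω U W (-ω x₁ y₁) y₁ (-y₂) e₃ w x₂ x₁ := by
  have hxy₂ : ω x₂ y₂ = -ω x₁ y₁ := by
    rw [h.form_add_add hx₁ hy₁ hx₂ hy₂] at hxy
    exact eq_neg_of_add_eq_zero_right hxy
  rw [add_comm, h.symm.form_add_left_eq hx₁ hw] at hxw
  rw [add_comm, h.symm.form_add_left_eq hy₁ hw] at hyw
  have hyx₂ : ω y₂ x₂ = ω x₁ y₁ := by rw [← h.isAlt.neg_eq, hxy₂, neg_neg]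
  have hyx₁ : ω y₁ x₁ = -ω x₁ y₁ := (h.isAlt.neg_eq _ _).symm
  have hli : LinearIndependent K ![x₂, y₂, w] := by
    rw [Fintype.linearIndependent_iff]
    intro c hc
    simp only [Fin.sum_univ_three, Matrix.cons_val] at hc
    have hc₁ : c 1 = 0 := by
      simpa [h.isAlt.self_eq_zero, hxw, hxy₂, hν] using congrArg (ω x₂) hc
    have hc₀ : c 0 = 0 := by
      simpa [h.isAlt.self_eq_zero, hyw, hyx₂, hν] using congrArg (ω y₂) hc
    have hc₂ : c 2 = 0 := by simpa [hc₀, hc₁, hw0] using hc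
    simp [Fin.forall_fin_succ, hc₀, hc₁, hc₂]
  obtain ⟨e₃, he₃, he⟩ := h.symm.exists_mem_forall_form_eq hli
    (by simp [Fin.forall_fin_succ, hx₂, hy₂, hw]) ![0, 0, -ω x₁ y₁]
  simp only [Fin.forall_fin_succ, Matrix.cons_val] at he
  refine ⟨e₃, ?_⟩
  constructor <;>
    simp_all [← h.isAlt.neg_eq e₃ y₂]

end IsSymplecticSplitting

/-- A flag `F₂ ⊆ F₃` of isotropic subspaces of dimensions `2` and `3`. -/
structure IsIsotropicFlag {K V : Type*} [Field K] [AddCommGroup V] [Module K V]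
    (ω : BilinForm K V) (F₂ F₃ : Submodule K V) : Prop where
  finrank_fst : finrank K F₂ = 2
  finrank_snd : finrank K F₃ = 3
  le : F₂ ≤ F₃
  isotropic : F₃ ≤ ω.orthogonal F₃

namespace IsIsotropicFlag

variable {K V : Type*} [Field K] [AddCommGroup V] [Module K V] {ω : BilinForm K V}
  {U W F₂ F₃ : Submodule K V}

lemma form_eq_zero (hF : IsIsotropicFlag ω F₂ F₃) {x y : V} (hx : x ∈ F₃) (hy : y ∈ F₃) :
    ω x y = 0 :=
  hF.isotropic hy x hx

lemma isotropic_fst (hF : IsIsotropicFlag ω F₂ F₃) : F₂ ≤ ω.orthogonal F₂ :=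
  fun _ hy _ hx ↦ hF.form_eq_zero (hF.le hx) (hF.le hy)

variable [FiniteDimensional K V]

lemma not_disjoint_snd_of_fst_le (hF : IsIsotropicFlag ω F₂ F₃)
    (h : IsSymplecticSplitting ω U W) (hU : finrank K U = 2) (hV : finrank K V = 6)
    (hle : F₂ ≤ W) : ¬ Disjoint F₃ U := by
  refine not_disjoint_of_finrank_lt (C := ω.orthogonal F₂)
    (fun y hy x hx ↦ hF.form_eq_zero (hF.le hx) hy)
    (fun u hu x hx ↦ h.symm.orthogonal x (hle hx) u hu) ?_
  rw [LinearMap.BilinForm.finrank_orthogonal h.nondegenerate, hV, hU, hF.finrank_fst,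
    hF.finrank_snd]
  norm_num

lemma exists_frame_of_fst_le (hF : IsIsotropicFlag ω F₂ F₃)
    (h : IsSymplecticSplitting ω U W) (hU : finrank K U = 2) (hV : finrank K V = 6)
    (hle : F₂ ≤ W) :
    ∃ e₁ e₂ e₃ f₃ f₂ f₁, IsAdaptedFrame ω U W 1 e₁ e₂ e₃ f₃ f₂ f₁ ∧
      f₂ ∈ F₂ ∧ f₃ ∈ F₂ ∧ f₁ ∈ F₃ := by
  obtain ⟨l, hlF, hlU, hl0⟩ :=
    not_disjoint_iff_exists_ne_zero.1 (hF.not_disjoint_snd_of_fst_le h hU hV hle)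
  have hrank : 1 < finrank K F₂ := by rw [hF.finrank_fst]; exact one_lt_two
  obtain ⟨w₂, hw₂, hw₂0⟩ := exists_mem_ne_zero_of_ne_bot (one_le_finrank_iff.1 hrank.le)
  obtain ⟨w₃, hw₃, hli⟩ := exists_linearIndependent_pair_of_mem hrank hw₂ hw₂0
  obtain ⟨e₁, e₂, e₃, hframe⟩ := h.exists_isAdaptedFrame_of_isotropic hlU hl0 (hle hw₂) (hle hw₃)
    hli (hF.form_eq_zero (hF.le hw₂) (hF.le hw₃))
  exact ⟨e₁, e₂, e₃, w₃, w₂, l, hframe, hw₂, hw₃, hlF⟩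

lemma exists_frame_of_not_disjoint_fst (hF : IsIsotropicFlag ω F₂ F₃)
    (h : IsSymplecticSplitting ω U W) (hU : finrank K U = 2) (hFU : ¬ Disjoint F₂ U) :
    ∃ e₁ e₂ e₃ f₃ f₂ f₁, IsAdaptedFrame ω U W 1 e₁ e₂ e₃ f₃ f₂ f₁ ∧
      f₁ ∈ F₂ ∧ f₂ ∈ F₂ ∧ f₃ ∈ F₃ := by
  obtain ⟨l, hlF, hlU, hl0⟩ := not_disjoint_iff_exists_ne_zero.1 hFU
  have hrank₂ : 1 ≤ finrank K ↥(F₂ ⊓ W) := by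
    have := h.finrank_le_finrank_inf_add_one hU hF.isotropic_fst hFU
    rw [hF.finrank_fst] at this
    lia
  have hrank₃ : 1 < finrank K ↥(F₃ ⊓ W) := by
    have := h.finrank_le_finrank_inf_add_one hU hF.isotropic fun hd ↦ hFU (hd.mono_left hF.le)
    rw [hF.finrank_snd] at this
    lia
  obtain ⟨w₂, ⟨hw₂F, hw₂⟩, hw₂0⟩ := exists_mem_ne_zero_of_ne_bot (one_le_finrank_iff.1 hrank₂)
  obtain ⟨w₃, ⟨hw₃F, hw₃⟩, hli⟩ :=
    exists_linearIndependent_pair_of_mem hrank₃ ⟨hF.le hw₂F, hw₂⟩ hw₂0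
  obtain ⟨e₁, e₂, e₃, hframe⟩ := h.exists_isAdaptedFrame_of_isotropic hlU hl0 hw₂ hw₃ hli
    (hF.form_eq_zero (hF.le hw₂F) hw₃F)
  exact ⟨e₁, e₂, e₃, w₃, w₂, l, hframe, hlF, hw₂F, hw₃F⟩

lemma exists_frame_of_not_disjoint_snd (hF : IsIsotropicFlag ω F₂ F₃)
    (h : IsSymplecticSplitting ω U W) (hU : finrank K U = 2) (hle : ¬ F₂ ≤ W)
    (hF₂U : Disjoint F₂ U) (hF₃U : ¬ Disjoint F₃ U) :
    ∃ e₁ e₂ e₃ f₃ f₂ f₁, IsAdaptedFrame ω U W 1 e₁ e₂ e₃ f₃ f₂ f₁ ∧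
      f₁ + f₂ ∈ F₂ ∧ f₃ ∈ F₂ ∧ f₁ ∈ F₃ ∧ f₂ ∈ F₃ := by
  obtain ⟨w₃, hw₃F, ⟨-, hw₃⟩, hw₃0⟩ : ∃ w ∈ F₂, w ∈ F₃ ⊓ W ∧ w ≠ 0 := by
    refine not_disjoint_iff_exists_ne_zero.1 (not_disjoint_of_finrank_lt hF.le inf_le_left ?_)
    have := h.finrank_le_finrank_inf_add_one hU hF.isotropic hF₃U
    rw [hF.finrank_snd] at this
    rw [hF.finrank_fst, hF.finrank_snd]
    lia
  obtain ⟨x, hx, hxW⟩ := SetLike.not_le_iff_exists.1 hle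
  obtain ⟨l, ⟨hlF, hlU⟩, w₂, ⟨hw₂F, hw₂⟩, rfl⟩ :=
    mem_sup.1 (h.le_inf_sup_inf_of_isotropic hU hF.isotropic hF₃U (hF.le hx))
  have hl0 : l ≠ 0 := by
    rintro rfl
    exact hxW (by rwa [zero_add])
  have hli : LinearIndependent K ![w₃, w₂] := by
    refine (LinearIndependent.pair_iff' hw₃0).2 fun a ha ↦ hl0 (disjoint_def.1 hF₂U l ?_ hlU)
    exact (F₂.add_mem_iff_left (ha ▸ F₂.smul_mem a hw₃F)).1 hx
  obtain ⟨e₁, e₂, e₃, hframe⟩ := h.exists_isAdaptedFrame_of_isotropic hlU hl0 hw₂ hw₃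
    (LinearIndependent.pair_symm_iff.1 hli) (hF.form_eq_zero hw₂F (hF.le hw₃F))
  exact ⟨e₁, e₂, e₃, w₃, w₂, l, hframe, hx, hw₃F, hlF, hw₂F⟩

lemma exists_frame_of_disjoint_snd (hF : IsIsotropicFlag ω F₂ F₃)
    (h : IsSymplecticSplitting ω U W) (hV : finrank K V = 6) (hle : ¬ F₂ ≤ W)
    (hF₂W : ¬ Disjoint F₂ W) (hF₃U : Disjoint F₃ U) :
    ∃ ν ≠ 0, ∃ e₁ e₂ e₃ f₃ f₂ f₁, IsAdaptedFrame ω U W ν e₁ e₂ e₃ f₃ f₂ f₁ ∧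
      f₁ + f₂ ∈ F₂ ∧ f₃ ∈ F₂ ∧ e₁ - e₂ ∈ F₃ := by
  obtain ⟨w, hwF, hw, hw0⟩ := not_disjoint_iff_exists_ne_zero.1 hF₂W
  obtain ⟨x, hx, hxW⟩ := SetLike.not_le_iff_exists.1 hle
  obtain ⟨x₁, hx₁, x₂, hx₂, rfl⟩ := h.exists_add_eq x
  have hx₁F : x₁ ∉ ω.orthogonal F₃ := by
    rw [orthogonal_eq_self_of_isotropic h.nondegenerate hF.isotropic (by rw [hF.finrank_snd, hV])]
    intro hmem
    rw [disjoint_def.1 hF₃U x₁ hmem hx₁, zero_add] at hxW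
    exact hxW hx₂
  obtain ⟨y, hy, hyx₁⟩ : ∃ y ∈ F₃, ω y x₁ ≠ 0 := by
    simpa [LinearMap.BilinForm.mem_orthogonal_iff] using hx₁F
  obtain ⟨y₁, hy₁, y₂, hy₂, rfl⟩ := h.exists_add_eq y
  have hν : ω x₁ y₁ ≠ 0 := by
    rwa [h.form_add_left_eq hy₂ hx₁, ← h.isAlt.neg_eq, neg_ne_zero] at hyx₁
  obtain ⟨e₃, hframe⟩ := h.exists_isAdaptedFrame_of_form_ne_zero hx₁ hx₂ hy₁ hy₂ hw hw0
    (hF.form_eq_zero (hF.le hx) hy) (hF.form_eq_zero (hF.le hx) (hF.le hwF))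
    (hF.form_eq_zero hy (hF.le hwF)) hν
  exact ⟨_, neg_ne_zero.2 hν, _, _, _, _, _, _, hframe, hx, hwF, by rwa [sub_neg_eq_add]⟩

lemma exists_frame_of_disjoint_fst (hF : IsIsotropicFlag ω F₂ F₃)
    (h : IsSymplecticSplitting ω U W) (hU : finrank K U = 2) (hV : finrank K V = 6)
    (hF₂W : Disjoint F₂ W) :
    ∃ ν ≠ 0, ∃ e₁ e₂ e₃ f₃ f₂ f₁, IsAdaptedFrame ω U W ν e₁ e₂ e₃ f₃ f₂ f₁ ∧
      f₁ + f₂ ∈ F₂ ∧ e₁ - e₂ ∈ F₂ ∧ f₃ ∈ F₃ := by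
  have hrank : 1 < finrank K F₂ := by rw [hF.finrank_fst]; exact one_lt_two
  obtain ⟨x, hx, hx0⟩ := exists_mem_ne_zero_of_ne_bot (one_le_finrank_iff.1 hrank.le)
  obtain ⟨y, hy, hli⟩ := exists_linearIndependent_pair_of_mem hrank hx hx0
  obtain ⟨x₁, hx₁, x₂, hx₂, rfl⟩ := h.exists_add_eq x
  obtain ⟨y₁, hy₁, y₂, hy₂, rfl⟩ := h.exists_add_eq y
  have hli₁ : LinearIndependent K ![x₁, y₁] := by
    refine LinearIndependent.pair_iff.2 fun s t hst ↦ LinearIndependent.pair_iff.1 hli s t ?_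
    have hcomb : s • (x₁ + x₂) + t • (y₁ + y₂) = s • x₂ + t • y₂ := by
      rw [smul_add, smul_add, add_add_add_comm, hst, zero_add]
    refine disjoint_def.1 hF₂W _ (add_mem (F₂.smul_mem s hx) (F₂.smul_mem t hy)) ?_
    rw [hcomb]
    exact add_mem (W.smul_mem s hx₂) (W.smul_mem t hy₂)
  have hν := h.form_ne_zero_of_linearIndependent hU hx₁ hy₁ hli₁
  obtain ⟨w, hwF, hw, hw0⟩ : ∃ w ∈ F₃, w ∈ W ∧ w ≠ 0 := by
    refine not_disjoint_iff_exists_ne_zero.1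
      (not_disjoint_of_finrank_lt le_top (le_top : W ≤ ⊤) ?_)
    have := finrank_add_eq_of_isCompl h.isCompl
    rw [finrank_top, hF.finrank_snd]
    lia
  obtain ⟨e₃, hframe⟩ := h.exists_isAdaptedFrame_of_form_ne_zero hx₁ hx₂ hy₁ hy₂ hw hw0
    (hF.form_eq_zero (hF.le hx) (hF.le hy)) (hF.form_eq_zero (hF.le hx) hwF)
    (hF.form_eq_zero (hF.le hy) hwF) hν
  exact ⟨_, neg_ne_zero.2 hν, _, _, _, _, _, _, hframe, hx, by rwa [sub_neg_eq_add], hwF⟩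

end IsIsotropicFlag

/-- `symp` as a bilinear form. -/
def sympForm : BilinForm ℚ V6 :=
  LinearMap.mk₂ ℚ symp
    (by intros; simp [symp]; ring) (by intros; simp [symp]; ring)
    (by intros; simp [symp]; ring) (by intros; simp [symp]; ring)

lemma sympForm_apply (x y : V6) : sympForm x y = symp x y := rfl

lemma mem_V1_iff {x : V6} : x ∈ V1 ↔ x 1 = 0 ∧ x 2 = 0 ∧ x 3 = 0 ∧ x 4 = 0 := by
  simp only [V1, mem_span_pair]
  constructor
  · rintro ⟨a, b, rfl⟩
    simp [e1, f1]
  · rintro ⟨h1, h2, h3, h4⟩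
    refine ⟨x 0, x 5, ?_⟩
    ext i
    fin_cases i <;> simp [e1, f1, h1, h2, h3, h4]

lemma mem_V2_iff {x : V6} : x ∈ V2 ↔ x 0 = 0 ∧ x 5 = 0 := by
  simp only [V2, mem_span_insert, mem_span_singleton]
  constructor
  · rintro ⟨a, _, ⟨b, _, ⟨c, _, ⟨d, rfl⟩, rfl⟩, rfl⟩, rfl⟩
    simp [e2, e3, f3, f2]
  · rintro ⟨h0, h5⟩
    refine ⟨x 1, _, ⟨x 2, _, ⟨x 3, _, ⟨x 4, rfl⟩, rfl⟩, rfl⟩, ?_⟩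
    ext i
    fin_cases i <;> simp [e2, e3, f3, f2, h0, h5]

lemma isAlt_sympForm : sympForm.IsAlt := fun x ↦ by
  simp only [sympForm_apply, symp]
  ring

lemma nondegenerate_sympForm : sympForm.Nondegenerate := by
  refine isAlt_sympForm.isRefl.nondegenerate_iff_separatingLeft.2 fun x hx ↦ ?_
  ext i
  fin_cases i
  · simpa [sympForm_apply, symp, f1] using hx f1
  · simpa [sympForm_apply, symp, f2] using hx f2
  · simpa [sympForm_apply, symp, f3] using hx f3
  · simpa [sympForm_apply, symp, e3] using hx e3
  · simpa [sympForm_apply, symp, e2] using hx e2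
  · simpa [sympForm_apply, symp, e1] using hx e1

lemma isCompl_V1_V2 : IsCompl V1 V2 := by
  refine IsCompl.of_eq (eq_bot_iff.2 fun x hx ↦ ?_) (eq_top_iff.2 fun x _ ↦ mem_sup.2 ?_)
  · obtain ⟨⟨h1, h2, h3, h4⟩, h0, h5⟩ := mem_inf.1 hx |>.imp mem_V1_iff.1 mem_V2_iff.1
    ext i
    fin_cases i <;> assumption
  · refine ⟨![x 0, 0, 0, 0, 0, x 5], ?_, ![0, x 1, x 2, x 3, x 4, 0], ?_, ?_⟩
    · simp [mem_V1_iff]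
    · simp [mem_V2_iff]
    · ext i
      fin_cases i <;> simp

lemma isSymplecticSplitting_V1_V2 : IsSymplecticSplitting sympForm V1 V2 where
  isAlt := isAlt_sympForm
  nondegenerate := nondegenerate_sympForm
  isCompl := isCompl_V1_V2
  orthogonal u hu w hw := by
    rw [mem_V1_iff] at hu
    rw [mem_V2_iff] at hw
    simp [sympForm_apply, symp, hu, hw]

lemma finrank_V1 : finrank ℚ V1 = 2 := by
  refine finrank_span_pair_of_linearIndependent (LinearIndependent.pair_iff.2 fun s t hst ↦ ?_)
  simpa [e1, f1, funext_iff, Fin.forall_fin_succ] using hst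

lemma finrank_V6 : finrank ℚ V6 = 6 := finrank_fin_fun ℚ

section Representatives

attribute [local simp] e1 e2 f1 f2 f3 funext_iff Fin.forall_fin_succ

lemma finrank_repFlag_fst (k : Fin 5) : finrank ℚ (repFlag k).1 = 2 := by
  fin_cases k <;>
    refine finrank_span_pair_of_linearIndependent
      (LinearIndependent.pair_iff.2 fun s t hst ↦ ?_) <;>
    simp_all

lemma finrank_repFlag_snd (k : Fin 5) : finrank ℚ (repFlag k).2 = 3 := by
  fin_cases k <;>
    refine finrank_span_triple_of_linearIndependent
      (Fintype.linearIndependent_iff.2 fun c hc ↦ ?_) <;>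
    simp_all [Fin.sum_univ_three]

lemma repFlag_fst_le_V2_iff (k : Fin 5) : (repFlag k).1 ≤ V2 ↔ k = 0 := by
  fin_cases k <;> simp [repFlag, span_le, Set.insert_subset_iff, mem_V2_iff]

lemma disjoint_repFlag_fst_V1_iff (k : Fin 5) : Disjoint (repFlag k).1 V1 ↔ k ≠ 1 := by
  fin_cases k <;> simp [repFlag, disjoint_span_pair_iff, mem_V1_iff, exists_ne]

lemma disjoint_repFlag_fst_V2_iff (k : Fin 5) : Disjoint (repFlag k).1 V2 ↔ k = 4 := by
  have h0 : ¬ Disjoint (repFlag 0).1 V2 :=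
    not_disjoint_iff_exists_ne_zero.2 ⟨f2, mem_span_pair.2 ⟨1, 0, by simp⟩, by simp [mem_V2_iff]⟩
  fin_cases k
  · simpa using h0
  all_goals simp [repFlag, disjoint_span_pair_iff, mem_V2_iff, exists_ne]

lemma disjoint_repFlag_snd_V1_iff (k : Fin 5) :
    Disjoint (repFlag k).2 V1 ↔ k = 3 ∨ k = 4 := by
  fin_cases k <;> simp [repFlag, disjoint_span_triple_iff, mem_V1_iff, exists_ne]

end Representatives

lemma IsAdaptedFrame.form_linearCombination {V : Type*} [AddCommGroup V] [Module ℚ V]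
    {ω : BilinForm ℚ V} {U W : Submodule ℚ V} {ν : ℚ} {u₁ u₂ u₃ v₃ v₂ v₁ : V}
    (hb : IsAdaptedFrame ω U W ν u₁ u₂ u₃ v₃ v₂ v₁) (h : IsSymplecticSplitting ω U W)
    (x y : V6) :
    ω (Fintype.linearCombination ℚ ![u₁, u₂, u₃, v₃, v₂, v₁] x)
      (Fintype.linearCombination ℚ ![u₁, u₂, u₃, v₃, v₂, v₁] y) = ν * symp x y := by
  obtain ⟨hu₁, hv₁, hu₂, hu₃, hv₃, hv₂, h11, h22, h33, huu, huv, huv', hvv⟩ := hb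
  have hskew {a b : V} {c : ℚ} (hab : ω a b = c) : ω b a = -c := by rw [← h.isAlt.neg_eq, hab]
  simp only [Fintype.linearCombination_apply, Fin.sum_univ_six, Matrix.cons_val, map_add, map_smul,
    LinearMap.add_apply, LinearMap.smul_apply, h.isAlt.self_eq_zero, h11, h22, h33, huu, huv, huv',
    hvv, hskew h11, hskew h22, hskew h33, hskew huu, hskew huv, hskew huv', hskew hvv,
    h.orthogonal u₁ hu₁, h.orthogonal v₁ hv₁, h.symm.orthogonal u₂ hu₂, h.symm.orthogonal u₃ hu₃,
    h.symm.orthogonal v₃ hv₃, h.symm.orthogonal v₂ hv₂, hu₁, hv₁, hu₂, hu₃, hv₃, hv₂,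
    smul_eq_mul, symp]
  ring

lemma exists_mem_Hgrp_of_isAdaptedFrame {ν : ℚ} {u₁ u₂ u₃ v₃ v₂ v₁ : V6} (hν : ν ≠ 0)
    (hb : IsAdaptedFrame sympForm V1 V2 ν u₁ u₂ u₃ v₃ v₂ v₁) :
    ∃ g ∈ Hgrp, g e1 = u₁ ∧ g e2 = u₂ ∧ g e3 = u₃ ∧ g f3 = v₃ ∧ g f2 = v₂ ∧ g f1 = v₁ := by
  let T := Fintype.linearCombination ℚ ![u₁, u₂, u₃, v₃, v₂, v₁]
  have hT (x y : V6) : sympForm (T x) (T y) = ν * sympForm x y :=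
    hb.form_linearCombination isSymplecticSplitting_V1_V2 x y
  let g := LinearEquiv.ofInjectiveEndo T (injective_of_similitude nondegenerate_sympForm hν hT)
  have hg (i : Fin 6) : g (Pi.single i 1) = ![u₁, u₂, u₃, v₃, v₂, v₁] i := by
    rw [LinearEquiv.coe_ofInjectiveEndo, Fintype.linearCombination_apply_single, one_smul]
  have hbasis : g e1 = u₁ ∧ g e2 = u₂ ∧ g e3 = u₃ ∧ g f3 = v₃ ∧ g f2 = v₂ ∧ g f1 = v₁ :=
    ⟨hg 0, hg 1, hg 2, hg 3, hg 4, hg 5⟩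
  have hV1 : V1.map (g : V6 →ₗ[ℚ] V6) ≤ V1 :=
    (map_span_le _ _ _).2 (by simp [hbasis, hb.e₁_mem, hb.f₁_mem])
  have hV2 : V2.map (g : V6 →ₗ[ℚ] V6) ≤ V2 :=
    (map_span_le _ _ _).2 (by simp [hbasis, hb.e₂_mem, hb.e₃_mem, hb.f₃_mem, hb.f₂_mem])
  exact ⟨g, ⟨⟨ν, hν, hT⟩, map_eq_of_map_le_of_finrank_eq hV1 rfl,
    map_eq_of_map_le_of_finrank_eq hV2 rfl⟩, hbasis⟩

/-- The flag `(F₂, F₃)` lies in the `H(ℚ)`-orbit of the `k`-th representative. -/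
def IsInOrbit (k : Fin 5) (F₂ F₃ : Submodule ℚ V6) : Prop :=
  ∃ g ∈ Hgrp, (repFlag k).1.map (g : V6 →ₗ[ℚ] V6) = F₂ ∧
    (repFlag k).2.map (g : V6 →ₗ[ℚ] V6) = F₃

namespace IsIsotropicFlag

variable {F₂ F₃ : Submodule ℚ V6}

lemma isInOrbit_of_map_le (hF : IsIsotropicFlag sympForm F₂ F₃) {k : Fin 5} {g : V6 ≃ₗ[ℚ] V6}
    (hg : g ∈ Hgrp) (h₂ : (repFlag k).1.map (g : V6 →ₗ[ℚ] V6) ≤ F₂)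
    (h₃ : (repFlag k).2.map (g : V6 →ₗ[ℚ] V6) ≤ F₃) : IsInOrbit k F₂ F₃ :=
  ⟨g, hg, map_eq_of_map_le_of_finrank_eq h₂ ((finrank_repFlag_fst k).trans hF.finrank_fst.symm),
    map_eq_of_map_le_of_finrank_eq h₃ ((finrank_repFlag_snd k).trans hF.finrank_snd.symm)⟩

lemma isInOrbit_zero (hF : IsIsotropicFlag sympForm F₂ F₃) (hle : F₂ ≤ V2) :
    IsInOrbit 0 F₂ F₃ := by
  obtain ⟨_, _, _, _, _, _, hb, hf₂, hf₃, hf₁⟩ :=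
    hF.exists_frame_of_fst_le isSymplecticSplitting_V1_V2 finrank_V1 finrank_V6 hle
  obtain ⟨g, hg, -, -, -, h₃, h₂, h₁⟩ := exists_mem_Hgrp_of_isAdaptedFrame one_ne_zero hb
  refine hF.isInOrbit_of_map_le hg ((map_span_le _ _ _).2 ?_) ((map_span_le _ _ _).2 ?_)
  · simp [h₂, h₃, hf₂, hf₃]
  · simp [h₁, h₂, h₃, hf₁, hF.le hf₂, hF.le hf₃]

lemma isInOrbit_one (hF : IsIsotropicFlag sympForm F₂ F₃) (hV1 : ¬ Disjoint F₂ V1) :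
    IsInOrbit 1 F₂ F₃ := by
  obtain ⟨_, _, _, _, _, _, hb, hf₁, hf₂, hf₃⟩ :=
    hF.exists_frame_of_not_disjoint_fst isSymplecticSplitting_V1_V2 finrank_V1 hV1
  obtain ⟨g, hg, -, -, -, h₃, h₂, h₁⟩ := exists_mem_Hgrp_of_isAdaptedFrame one_ne_zero hb
  refine hF.isInOrbit_of_map_le hg ((map_span_le _ _ _).2 ?_) ((map_span_le _ _ _).2 ?_)
  · simp [h₁, h₂, hf₁, hf₂]
  · simp [h₁, h₂, h₃, hF.le hf₁, hF.le hf₂, hf₃]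

lemma isInOrbit_two (hF : IsIsotropicFlag sympForm F₂ F₃) (hle : ¬ F₂ ≤ V2)
    (h₂V1 : Disjoint F₂ V1) (h₃V1 : ¬ Disjoint F₃ V1) : IsInOrbit 2 F₂ F₃ := by
  obtain ⟨_, _, _, _, _, _, hb, hf₁₂, hf₃, hf₁, hf₂⟩ :=
    hF.exists_frame_of_not_disjoint_snd isSymplecticSplitting_V1_V2 finrank_V1 hle h₂V1 h₃V1
  obtain ⟨g, hg, -, -, -, h₃, h₂, h₁⟩ := exists_mem_Hgrp_of_isAdaptedFrame one_ne_zero hb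
  refine hF.isInOrbit_of_map_le hg ((map_span_le _ _ _).2 ?_) ((map_span_le _ _ _).2 ?_)
  · simp [h₁, h₂, h₃, hf₁₂, hf₃]
  · simp [h₁, h₂, h₃, hf₁, hf₂, hF.le hf₃]

lemma isInOrbit_three (hF : IsIsotropicFlag sympForm F₂ F₃) (hle : ¬ F₂ ≤ V2)
    (h₂V2 : ¬ Disjoint F₂ V2) (h₃V1 : Disjoint F₃ V1) : IsInOrbit 3 F₂ F₃ := by
  obtain ⟨ν, hν, _, _, _, _, _, _, hb, hf₁₂, hf₃, he₁₂⟩ :=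
    hF.exists_frame_of_disjoint_snd isSymplecticSplitting_V1_V2 finrank_V6 hle h₂V2 h₃V1
  obtain ⟨g, hg, h₁', h₂', -, h₃, h₂, h₁⟩ := exists_mem_Hgrp_of_isAdaptedFrame hν hb
  refine hF.isInOrbit_of_map_le hg ((map_span_le _ _ _).2 ?_) ((map_span_le _ _ _).2 ?_)
  · simp [h₁, h₂, h₃, hf₁₂, hf₃]
  · simp [h₁, h₂, h₃, h₁', h₂', hF.le hf₁₂, hF.le hf₃, he₁₂]

lemma isInOrbit_four (hF : IsIsotropicFlag sympForm F₂ F₃) (h₂V2 : Disjoint F₂ V2) :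
    IsInOrbit 4 F₂ F₃ := by
  obtain ⟨ν, hν, _, _, _, _, _, _, hb, hf₁₂, he₁₂, hf₃⟩ :=
    hF.exists_frame_of_disjoint_fst isSymplecticSplitting_V1_V2 finrank_V1 finrank_V6 h₂V2
  obtain ⟨g, hg, h₁', h₂', -, h₃, h₂, h₁⟩ := exists_mem_Hgrp_of_isAdaptedFrame hν hb
  refine hF.isInOrbit_of_map_le hg ((map_span_le _ _ _).2 ?_) ((map_span_le _ _ _).2 ?_)
  · simp [h₁, h₂, h₁', h₂', hf₁₂, he₁₂]
  · simp [h₁, h₂, h₃, h₁', h₂', hF.le hf₁₂, hF.le he₁₂, hf₃]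

theorem exists_isInOrbit (hF : IsIsotropicFlag sympForm F₂ F₃) : ∃ k, IsInOrbit k F₂ F₃ := by
  by_cases hle : F₂ ≤ V2
  · exact ⟨0, hF.isInOrbit_zero hle⟩
  by_cases h₂V1 : Disjoint F₂ V1
  · by_cases h₂V2 : Disjoint F₂ V2
    · exact ⟨4, hF.isInOrbit_four h₂V2⟩
    by_cases h₃V1 : Disjoint F₃ V1
    · exact ⟨3, hF.isInOrbit_three hle h₂V2 h₃V1⟩
    · exact ⟨2, hF.isInOrbit_two hle h₂V1 h₃V1⟩
  · exact ⟨1, hF.isInOrbit_one h₂V1⟩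

end IsIsotropicFlag

/-- The position of the flag `(F₂, F₃)` relative to `V1` and `V2` is that of the `k`-th
representative. -/
structure HasPosition (k : Fin 5) (F₂ F₃ : Submodule ℚ V6) : Prop where
  fst_le_V2 : F₂ ≤ V2 ↔ k = 0
  disjoint_fst_V1 : Disjoint F₂ V1 ↔ k ≠ 1
  disjoint_fst_V2 : Disjoint F₂ V2 ↔ k = 4
  disjoint_snd_V1 : Disjoint F₃ V1 ↔ k = 3 ∨ k = 4

lemma hasPosition_repFlag (k : Fin 5) : HasPosition k (repFlag k).1 (repFlag k).2 where
  fst_le_V2 := repFlag_fst_le_V2_iff k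
  disjoint_fst_V1 := disjoint_repFlag_fst_V1_iff k
  disjoint_fst_V2 := disjoint_repFlag_fst_V2_iff k
  disjoint_snd_V1 := disjoint_repFlag_snd_V1_iff k

lemma map_le_V2_iff_of_mem_Hgrp {g : V6 ≃ₗ[ℚ] V6} (hg : g ∈ Hgrp) (F : Submodule ℚ V6) :
    F.map (g : V6 →ₗ[ℚ] V6) ≤ V2 ↔ F ≤ V2 := by
  conv_lhs => rw [← hg.2.2]
  exact map_le_map_iff_of_injective g.injective F V2

lemma HasPosition.map {k : Fin 5} {F₂ F₃ : Submodule ℚ V6} (h : HasPosition k F₂ F₃)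
    {g : V6 ≃ₗ[ℚ] V6} (hg : g ∈ Hgrp) :
    HasPosition k (F₂.map (g : V6 →ₗ[ℚ] V6)) (F₃.map (g : V6 →ₗ[ℚ] V6)) := by
  have hV1 (F : Submodule ℚ V6) : Disjoint (F.map (g : V6 →ₗ[ℚ] V6)) V1 ↔ Disjoint F V1 := by
    rw [← disjoint_map_map_iff g F V1, hg.2.1]
  have hV2 (F : Submodule ℚ V6) : Disjoint (F.map (g : V6 →ₗ[ℚ] V6)) V2 ↔ Disjoint F V2 := by
    rw [← disjoint_map_map_iff g F V2, hg.2.2]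
  exact ⟨(map_le_V2_iff_of_mem_Hgrp hg F₂).trans h.fst_le_V2, (hV1 F₂).trans h.disjoint_fst_V1,
    (hV2 F₂).trans h.disjoint_fst_V2, (hV1 F₃).trans h.disjoint_snd_V1⟩

lemma HasPosition.index_unique {j k : Fin 5} {F₂ F₃ : Submodule ℚ V6} (hj : HasPosition j F₂ F₃)
    (hk : HasPosition k F₂ F₃) : j = k := by
  have h₀ := hj.fst_le_V2.symm.trans hk.fst_le_V2
  have h₁ := hj.disjoint_fst_V1.symm.trans hk.disjoint_fst_V1
  have h₂ := hj.disjoint_fst_V2.symm.trans hk.disjoint_fst_V2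
  have h₃ := hj.disjoint_snd_V1.symm.trans hk.disjoint_snd_V1
  clear hj hk
  revert j k
  decide

lemma IsInOrbit.hasPosition {k : Fin 5} {F₂ F₃ : Submodule ℚ V6} (h : IsInOrbit k F₂ F₃) :
    HasPosition k F₂ F₃ := by
  obtain ⟨g, hg, rfl, rfl⟩ := h
  exact (hasPosition_repFlag k).map hg

end FlagOrbit

/-- Every `H(ℚ)`-orbit of isotropic flags `F2 ⊆ F3` (with `dim F2 = 2`, `dim F3 = 3`)
contains exactly one of the five representatives. -/
theorem flag_orbit_classification (F2 F3 : Submodule ℚ V6)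
    (h2 : Module.finrank ℚ F2 = 2) (h3 : Module.finrank ℚ F3 = 3)
    (hle : F2 ≤ F3) (hiso : IsIsotropic F3) :
    ∃! k : Fin 5, ∃ g ∈ Hgrp,
      Submodule.map (g : V6 →ₗ[ℚ] V6) (repFlag k).1 = F2 ∧
      Submodule.map (g : V6 →ₗ[ℚ] V6) (repFlag k).2 = F3 := by
  have hF : FlagOrbit.IsIsotropicFlag FlagOrbit.sympForm F2 F3 :=
    ⟨h2, h3, hle, fun y hy x hx ↦ hiso x hx y hy⟩
  obtain ⟨k, hk⟩ := hF.exists_isInOrbit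
  exact ⟨k, hk, fun j hj ↦ (FlagOrbit.IsInOrbit.hasPosition hj).index_unique hk.hasPosition⟩
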